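/- Adopt the iterated trimming setup with F_• and each G_•^i length-3 DG-algebras, and assume the complexes F_• and all G_•^i are minimal (their differentials tensored with k vanish). Equip T_• with the DG-algebra structure of the main theorem and let T̄_• = T_• ⊗_R k with the induced k-algebra structure. Then the only possibly nontrivial products in the graded k-algebra T̄_• are those of the forms F̄_1' · F̄_1', F̄_1' · F̄_2, F̄_1' · Ḡ_1^i, Ḡ_1^i · F̄_2, and F̄_1' · Ḡ_2^i (1 ≤ i ≤ t); all products involving two factors from the summands Ḡ_•^i, and all other products, vanish. -/

import Mathlib

open IsLocalRing

/-!
STATEMENT 4 (Corollary 3.4, first part): assume in the length-3 iterated trimming setup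
that the complexes `F_•` and `G^i_•` are all minimal (differentials land in `𝔪` times
the target).  Equip the trimming complex `T` with the DG-algebra structure of
Theorem 3.2 (axioms + formulas (1)–(9)).  Then, in `T̄ = T ⊗ k` (where products vanish
iff they land in `𝔪 • T`), the only possibly nontrivial products are
`F̄₁'·F̄₁'`, `F̄₁'·F̄₂`, `F̄₁'·Ḡ₁ⁱ`, `Ḡ₁ⁱ·F̄₂` and `F̄₁'·Ḡ₂ⁱ`: all products with both
factors from the `Ḡ`-summands vanish (all other products vanish for degree reasons).
-/
universe u

section TrimmingSetup

variable {R : Type u} [CommRing R] {t : ℕ}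
variable {F1' F2 F3 : Type u}
variable [AddCommGroup F1'] [Module R F1'] [AddCommGroup F2] [Module R F2]
variable [AddCommGroup F3] [Module R F3]
variable {G1 G2 G3 : Fin t → Type u}
variable [∀ i, AddCommGroup (G1 i)] [∀ i, Module R (G1 i)]
variable [∀ i, AddCommGroup (G2 i)] [∀ i, Module R (G2 i)]
variable [∀ i, AddCommGroup (G3 i)] [∀ i, Module R (G3 i)]

/-- The differential `ℓ₁` of the trimming complex (Remark 2.9). -/
def Tl1 (d1 : (F1' × (Fin t → R)) →ₗ[R] R) (m1 : ∀ i, G1 i →ₗ[R] R) :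
    (F1' × (∀ i, G1 i)) → R :=
  fun z => d1 (z.1, 0) - ∑ i, m1 i (z.2 i) * d1 (0, Pi.single i 1)

/-- The differential `ℓ₂` of the trimming complex (Remark 2.9). -/
def Tl2 (d2 : F2 →ₗ[R] (F1' × (Fin t → R))) (q1 : ∀ i, F2 →ₗ[R] G1 i)
    (m2 : ∀ i, G2 i →ₗ[R] G1 i) :
    (F2 × (∀ i, G2 i)) → (F1' × (∀ i, G1 i)) :=
  fun w => ((d2 w.1).1, fun i => - q1 i w.1 + m2 i (w.2 i))

/-- The differential `ℓ₃` of the trimming complex (Remark 2.9). -/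
def Tl3 (d3 : F3 →ₗ[R] F2) (q2 : ∀ i, F3 →ₗ[R] G2 i)
    (m3 : ∀ i, G3 i →ₗ[R] G2 i) :
    (F3 × (∀ i, G3 i)) → (F2 × (∀ i, G2 i)) :=
  fun u => (d3 u.1, fun i => q2 i u.1 + m3 i (u.2 i))

/-- The axioms for an associative DG-algebra structure `(t11, t12)` on the length-3
trimming complex `T` (Leibniz rule, graded commutativity, vanishing odd squares,
associativity). -/
def TrimDGAxioms (d1 : (F1' × (Fin t → R)) →ₗ[R] R)
    (d2 : F2 →ₗ[R] (F1' × (Fin t → R))) (d3 : F3 →ₗ[R] F2)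
    (m1 : ∀ i, G1 i →ₗ[R] R) (m2 : ∀ i, G2 i →ₗ[R] G1 i) (m3 : ∀ i, G3 i →ₗ[R] G2 i)
    (q1 : ∀ i, F2 →ₗ[R] G1 i) (q2 : ∀ i, F3 →ₗ[R] G2 i)
    (t11 : (F1' × (∀ i, G1 i)) →ₗ[R] (F1' × (∀ i, G1 i)) →ₗ[R] (F2 × (∀ i, G2 i)))
    (t12 : (F1' × (∀ i, G1 i)) →ₗ[R] (F2 × (∀ i, G2 i)) →ₗ[R] (F3 × (∀ i, G3 i))) :
    Prop :=
  (∀ z z', Tl2 d2 q1 m2 (t11 z z') = Tl1 d1 m1 z • z' - Tl1 d1 m1 z' • z) ∧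
  (∀ z, t11 z z = 0) ∧
  (∀ z z', t11 z z' = - t11 z' z) ∧
  (∀ z w, Tl3 d3 q2 m3 (t12 z w) = Tl1 d1 m1 z • w - t11 z (Tl2 d2 q1 m2 w)) ∧
  (∀ z z' z'', t12 z'' (t11 z z') = t12 z (t11 z' z''))

/-- The formulas (1)–(9) of Theorem 3.2 for the product on the trimming complex. -/
def TrimDGFormulas [DecidableEq (Fin t)]
    (d1 : (F1' × (Fin t → R)) →ₗ[R] R) (d3 : F3 →ₗ[R] F2)
    (m1 : ∀ i, G1 i →ₗ[R] R) (m2 : ∀ i, G2 i →ₗ[R] G1 i) (m3 : ∀ i, G3 i →ₗ[R] G2 i)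
    (q1 : ∀ i, F2 →ₗ[R] G1 i) (q2 : ∀ i, F3 →ₗ[R] G2 i)
    (μ11 : (F1' × (Fin t → R)) →ₗ[R] (F1' × (Fin t → R)) →ₗ[R] F2)
    (μ12 : (F1' × (Fin t → R)) →ₗ[R] F2 →ₗ[R] F3)
    (γ11 : ∀ i, G1 i →ₗ[R] G1 i →ₗ[R] G2 i)
    (γ12 : ∀ i, G1 i →ₗ[R] G2 i →ₗ[R] G3 i)
    (t11 : (F1' × (∀ i, G1 i)) →ₗ[R] (F1' × (∀ i, G1 i)) →ₗ[R] (F2 × (∀ i, G2 i)))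
    (t12 : (F1' × (∀ i, G1 i)) →ₗ[R] (F2 × (∀ i, G2 i)) →ₗ[R] (F3 × (∀ i, G3 i))) :
    Prop :=
  -- (1)  F₁' ⊗ F₁' → F₂ ⊕ (⊕ᵢ G₂ⁱ)
  (∀ f f' : F1', ∃ g2 : ∀ i, G2 i,
    (∀ i, m2 i (g2 i) = q1 i (μ11 (f, 0) (f', 0))) ∧
    t11 (f, 0) (f', 0) = (μ11 (f, 0) (f', 0), g2)) ∧
  -- (2)  F₁' ⊗ G₁ⁱ → F₂ ⊕ (⊕ⱼ G₂ʲ)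
  (∀ (f : F1') (i : Fin t) (g : G1 i), ∃ g2 : ∀ j, G2 j,
    (∀ j, m2 j (g2 j) =
      m1 i g • q1 j (μ11 (0, Pi.single i 1) (f, 0)) + Pi.single i (d1 (f, 0) • g) j) ∧
    t11 (f, 0) (0, Pi.single i g) = (m1 i g • μ11 (0, Pi.single i 1) (f, 0), g2)) ∧
  -- (3)  G₁ⁱ ⊗ G₁ⁱ → F₂ ⊕ (⊕ⱼ G₂ʲ)
  (∀ (i : Fin t) (g g' : G1 i),
    t11 (0, Pi.single i g) (0, Pi.single i g') =
      (0, Pi.single i (-(d1 (0, Pi.single i 1) • γ11 i g g')))) ∧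
  -- (4)  G₁ⁱ ⊗ G₁ʲ → F₂ ⊕ (⊕ₖ G₂ᵏ), i < j
  (∀ (i j : Fin t), i < j → ∀ (g : G1 i) (g' : G1 j), ∃ g2 : ∀ k, G2 k,
    (∀ k, m2 k (g2 k) =
      (m1 i g * m1 j g') • q1 k (μ11 (0, Pi.single i 1) (0, Pi.single j 1)) +
      Pi.single i ((m1 j g' * d1 (0, Pi.single j 1)) • g) k -
      Pi.single j ((m1 i g * d1 (0, Pi.single i 1)) • g') k) ∧
    t11 (0, Pi.single i g) (0, Pi.single j g') =
      ((m1 i g * m1 j g') • μ11 (0, Pi.single i 1) (0, Pi.single j 1), g2)) ∧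
  -- (5)  F₁' ⊗ F₂ → F₃ ⊕ (⊕ᵢ G₃ⁱ)
  (∀ (f : F1') (w : F2), ∃ g3 : ∀ i, G3 i,
    t12 (f, 0) (w, 0) = (μ12 (f, 0) w, g3)) ∧
  -- (6)  F₁' ⊗ G₂ⁱ → F₃ ⊕ (⊕ⱼ G₃ʲ)
  (∀ (f : F1') (i : Fin t) (c : G2 i), ∃ g3 : ∀ j, G3 j,
    t12 (f, 0) (0, Pi.single i c) = (0, g3)) ∧
  -- (7)  G₁ⁱ ⊗ G₂ⁱ → F₃ ⊕ (⊕ⱼ G₃ʲ)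
  (∀ (i : Fin t) (g : G1 i) (c : G2 i),
    t12 (0, Pi.single i g) (0, Pi.single i c) =
      (0, Pi.single i (-(d1 (0, Pi.single i 1) • γ12 i g c)))) ∧
  -- (8)  G₁ⁱ ⊗ G₂ʲ → F₃ ⊕ (⊕ₖ G₃ᵏ), i ≠ j
  (∀ (i j : Fin t), i ≠ j → ∀ (g : G1 i) (c : G2 j), ∃ g3 : ∀ k, G3 k,
    t12 (0, Pi.single i g) (0, Pi.single j c) = (0, g3)) ∧
  -- (9)  G₁ⁱ ⊗ F₂ → F₃ ⊕ (⊕ⱼ G₃ʲ)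
  (∀ (i : Fin t) (g : G1 i) (w : F2), ∃ g3 : ∀ j, G3 j,
    t12 (0, Pi.single i g) (w, 0) = (-(m1 i g) • μ12 (0, Pi.single i 1) w, g3))

end TrimmingSetup

/-!
The proof uses the chain map `φ : T → F` that is the identity on `F₁'`, `F₂`, `F₃` and sends
`g ∈ G₁ᵏ` to `-m₁(g) e_k`. For a trimmed generator `e_k` let `x_k : F₁ → G₁ᵏ` be `q₁ᵏ` applied to
multiplication by `e_k`. Then `y_k(z) = x_k(φ z) + d₁(e_k) z_k` satisfies `m₁ (y_k(z)) = -ℓ₁(z)`, so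
it is, up to sign, the comparison map `T₁ → G₁ᵏ`. The product of `z, z' ∈ T₁` has the `F₂`-component
`φ z · φ z'` and the `G₂ᵏ`-components `β_k(φ z, φ z') - z_k · x_k(φ z') - y_k(z) · z'_k`.
The alternating forms `β_k`, obtained by lifting through `G₂ᵏ → G₁ᵏ` on the kernel of the
`e_k`-coordinate, make the Leibniz rule hold.

As `ℓ₃` is injective and the complex is exact at `T₂`, the products `T₁ · T₂ → T₃` and their
associativity are forced by the Leibniz rule; in particular `z · c = -∑ₖ y_k(z) · c_k` for
`c ∈ ⨁ₖ G₂ᵏ`. Minimality gives `φ g ∈ 𝔪 F₁` and `d₁(e_k) ∈ 𝔪` for `g ∈ ⨁ₖ G₁ᵏ`, hence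
`y_k(g) ∈ 𝔪 G₁ᵏ`, and every term in a product of two elements of the `G`-summands lies in `𝔪 T`.
-/

section AlternatingLift

variable {R M N P : Type*} [CommRing R] [AddCommGroup M] [Module R M]
variable [AddCommGroup N] [Module R N] [AddCommGroup P] [Module R P]

theorem exists_isAlt_lift_of_basis {ι : Type*} (b : Module.Basis ι R M) {p : P →ₗ[R] N}
    {A : M →ₗ[R] M →ₗ[R] N} (hA : A.IsAlt) (hp : ∀ x y, A x y ∈ LinearMap.range p) :
    ∃ B : M →ₗ[R] M →ₗ[R] P, B.IsAlt ∧ ∀ x y, p (B x y) = A x y := by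
  classical
  choose c hc using hp
  let : LinearOrder ι := linearOrderOfSTO WellOrderingRel
  -- The part of a lift strictly above the diagonal, to be antisymmetrized.
  let U : M →ₗ[R] M →ₗ[R] P :=
    b.constr R fun i => b.constr R fun j => if i < j then c (b i) (b j) else 0
  have hU (i j : ι) : U (b i) (b j) = if i < j then c (b i) (b j) else 0 := by
    simp only [U, Module.Basis.constr_basis]
  refine ⟨U - U.flip, fun x => sub_self _, fun x y => ?_⟩
  suffices h : (U - U.flip).compr₂ p = A from LinearMap.congr_fun₂ h x y
  refine b.ext fun i => b.ext fun j => ?_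
  simp only [LinearMap.compr₂_apply, LinearMap.sub_apply, LinearMap.flip_apply, hU]
  rcases lt_trichotomy i j with hij | rfl | hij
  · rw [if_pos hij, if_neg hij.asymm, sub_zero, hc]
  · rw [sub_self, map_zero, hA]
  · rw [if_neg hij.asymm, if_pos hij, zero_sub, map_neg, hc, hA.neg]

theorem exists_isAlt_lift [Module.Projective R M] {p : P →ₗ[R] N}
    {A : M →ₗ[R] M →ₗ[R] N} (hA : A.IsAlt) (hp : ∀ x y, A x y ∈ LinearMap.range p) :
    ∃ B : M →ₗ[R] M →ₗ[R] P, B.IsAlt ∧ ∀ x y, p (B x y) = A x y := by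
  obtain ⟨s, hs⟩ := Module.projective_def.mp ‹Module.Projective R M›
  obtain ⟨B, hB, hpB⟩ := exists_isAlt_lift_of_basis (p := p) Finsupp.basisSingleOne
    (A := A.compl₁₂ (Finsupp.linearCombination R id) (Finsupp.linearCombination R id))
    (fun _ => hA _) (fun _ _ => hp _ _)
  refine ⟨B.compl₁₂ s s, fun x => hB (s x), fun x y => ?_⟩
  simp only [LinearMap.compl₁₂_apply, hpB, hs _]

end AlternatingLift

section SmulTop

variable {R M N : Type*} [CommRing R] [AddCommGroup M] [Module R M] [AddCommGroup N] [Module R N]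
variable {J : Ideal R}

theorem map_mem_smul_top (f : M →ₗ[R] N) {a : M} (ha : a ∈ J • (⊤ : Submodule R M)) :
    f a ∈ J • (⊤ : Submodule R N) :=
  Submodule.smul_top_le_comap_smul_top J f ha

theorem prodMk_mem_smul_top {ι : Type*} [Finite ι] {G : ι → Type*} [∀ i, AddCommGroup (G i)]
    [∀ i, Module R (G i)] {a : M} {g : ∀ i, G i} (ha : a ∈ J • (⊤ : Submodule R M))
    (hg : ∀ i, g i ∈ J • (⊤ : Submodule R (G i))) :
    (a, g) ∈ J • (⊤ : Submodule R (M × ∀ i, G i)) := by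
  classical
  cases nonempty_fintype ι
  have hsum : g ∈ J • (⊤ : Submodule R (∀ i, G i)) := by
    rw [← Finset.univ_sum_single g]
    exact sum_mem fun i _ => map_mem_smul_top (LinearMap.single R G i) (hg i)
  simpa using add_mem (map_mem_smul_top (LinearMap.inl R M (∀ i, G i)) ha)
    (map_mem_smul_top (LinearMap.inr R M (∀ i, G i)) hsum)

end SmulTop

section DGProduct

variable {R M N P : Type*} [CommRing R] [AddCommGroup M] [Module R M]
variable [AddCommGroup N] [Module R N] [AddCommGroup P] [Module R P]
variable {d₁ : M →ₗ[R] R} {d₂ : N →ₗ[R] M} {d₃ : P →ₗ[R] N}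
variable {μ₁₁ : M →ₗ[R] M →ₗ[R] N} {μ₁₂ : M →ₗ[R] N →ₗ[R] P}

/-- The part of a DG-algebra structure on a complex `R ← M ← N ← ⋯` that multiplies two elements
of degree one: the Leibniz rule and the vanishing of squares. -/
structure IsDGProduct₁₁ (d₁ : M →ₗ[R] R) (d₂ : N →ₗ[R] M) (μ₁₁ : M →ₗ[R] M →ₗ[R] N) :
    Prop where
  leibniz₁₁ (a b : M) : d₂ (μ₁₁ a b) = d₁ a • b - d₁ b • a
  isAlt : μ₁₁.IsAlt

/-- A graded-commutative DG-algebra structure on a complex `R ← M ← N ← P`. The product `N × M → P`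
is determined by `μ₁₂`; associativity is not required, since it is automatic when `d₃` is injective
(`IsDGProduct.assoc`). -/
structure IsDGProduct (d₁ : M →ₗ[R] R) (d₂ : N →ₗ[R] M) (d₃ : P →ₗ[R] N)
    (μ₁₁ : M →ₗ[R] M →ₗ[R] N) (μ₁₂ : M →ₗ[R] N →ₗ[R] P) : Prop
    extends IsDGProduct₁₁ d₁ d₂ μ₁₁ where
  leibniz₁₂ (a : M) (v : N) : d₃ (μ₁₂ a v) = d₁ a • v - μ₁₁ a (d₂ v)

theorem IsDGProduct.assoc (h : IsDGProduct d₁ d₂ d₃ μ₁₁ μ₁₂) (hd₃ : Function.Injective d₃)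
    (a b c : M) : μ₁₂ c (μ₁₁ a b) = μ₁₂ a (μ₁₁ b c) := by
  apply hd₃
  simp only [h.leibniz₁₂, h.leibniz₁₁, map_sub, map_smul]
  rw [← h.isAlt.neg a c, ← h.isAlt.neg b c]
  module

theorem IsDGProduct₁₁.exists_isDGProduct (h : IsDGProduct₁₁ d₁ d₂ μ₁₁)
    (hd₁₂ : ∀ v, d₁ (d₂ v) = 0) (hd₂₃ : Function.Exact d₃ d₂) (hd₃ : Function.Injective d₃) :
    ∃ μ₁₂ : M →ₗ[R] N →ₗ[R] P, IsDGProduct d₁ d₂ d₃ μ₁₁ μ₁₂ := by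
  let A : M →ₗ[R] N →ₗ[R] N := LinearMap.lsmul R N ∘ₗ d₁ - μ₁₁.compl₂ d₂
  have hA (a : M) (v : N) : A a v ∈ LinearMap.range d₃ := by
    refine (hd₂₃ _).mp ?_
    simp [A, h.leibniz₁₁, hd₁₂]
  exact ⟨A.codRestrict₂ d₃ hd₃ hA, h, fun a v => LinearMap.codRestrict₂_apply A d₃ hd₃ hA a v⟩

theorem IsDGProduct.map_mul₁₂ {M' N' P' : Type*} [AddCommGroup M'] [Module R M']
    [AddCommGroup N'] [Module R N'] [AddCommGroup P'] [Module R P']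
    {d₁' : M' →ₗ[R] R} {d₂' : N' →ₗ[R] M'} {d₃' : P' →ₗ[R] N'}
    {μ₁₁' : M' →ₗ[R] M' →ₗ[R] N'} {μ₁₂' : M' →ₗ[R] N' →ₗ[R] P'}
    (h : IsDGProduct d₁ d₂ d₃ μ₁₁ μ₁₂) (h' : IsDGProduct d₁' d₂' d₃' μ₁₁' μ₁₂')
    (hd₃' : Function.Injective d₃') {φ₁ : M →ₗ[R] M'} {φ₂ : N →ₗ[R] N'} {φ₃ : P →ₗ[R] P'}
    (hφ₁ : ∀ a, d₁' (φ₁ a) = d₁ a) (hφ₂ : ∀ v, d₂' (φ₂ v) = φ₁ (d₂ v))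
    (hφ₃ : ∀ u, d₃' (φ₃ u) = φ₂ (d₃ u))
    (hφ₁₁ : ∀ a b, φ₂ (μ₁₁ a b) = μ₁₁' (φ₁ a) (φ₁ b)) (a : M) (v : N) :
    φ₃ (μ₁₂ a v) = μ₁₂' (φ₁ a) (φ₂ v) := by
  apply hd₃'
  rw [hφ₃, h.leibniz₁₂, h'.leibniz₁₂, map_sub, map_smul, hφ₁₁, hφ₁, hφ₂]

end DGProduct

section OneGenerator

variable {R M G₁ G₂ : Type*} [CommRing R] [AddCommGroup M] [Module R M]
variable [AddCommGroup G₁] [Module R G₁] [AddCommGroup G₂] [Module R G₂]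
variable {d₁ π : M →ₗ[R] R} {e : M} {m₁ : G₁ →ₗ[R] R} {m₂ : G₂ →ₗ[R] G₁}
variable {κ : M →ₗ[R] M →ₗ[R] G₁}

theorem exists_isAlt_correction [Module.Projective R M] (he : π e = 1) (hκ : κ.IsAlt)
    (hm₁κ : ∀ a b, m₁ (κ a b) = d₁ a * π b - d₁ b * π a) (hm : Function.Exact m₂ m₁) :
    ∃ β : M →ₗ[R] M →ₗ[R] G₂, β.IsAlt ∧ β e = 0 ∧
      ∀ a b, m₂ (β a b) = κ a b - π a • κ e b + π b • κ e a := by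
  -- `p` projects onto `ker π` along `e`.
  let p : M →ₗ[R] M := LinearMap.id - π.smulRight e
  have hp (a : M) : p a = a - π a • e := rfl
  have hpe : p e = 0 := by rw [hp, he, one_smul, sub_self]
  have hπp (a : M) : π (p a) = 0 := by simp [hp, he]
  have hpp (a : M) : p (p a) = p a := by rw [hp (p a), hπp, zero_smul, sub_zero]
  obtain ⟨B, hB, hmB⟩ := exists_isAlt_lift (p := m₂) (A := κ.compl₁₂ p p) (fun a => hκ (p a))
    fun a b => (hm _).mp <| by simp [hm₁κ, hπp]
  refine ⟨B.compl₁₂ p p, fun a => hB (p a), ?_, fun a b => ?_⟩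
  · ext b
    simp [hpe]
  · rw [LinearMap.compl₁₂_apply, hmB, LinearMap.compl₁₂_apply, hpp, hpp, hp, hp]
    simp only [map_sub, map_smul, LinearMap.sub_apply, LinearMap.smul_apply, hκ.self_eq_zero,
      ← hκ.neg e a]
    module

variable (β : M →ₗ[R] M →ₗ[R] G₂) (γ : G₁ →ₗ[R] G₁ →ₗ[R] G₂) (x : M →ₗ[R] G₁) (c : R)

/-- The map `(a, g) ↦ x a + c • g`. With `x` the lift of multiplication by the trimmed generator
`e` and `c = d₁ e`, it is, up to sign, the comparison map in degree one from the trimming complex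
to the resolution `G`. -/
def generatorLift : M × G₁ →ₗ[R] G₁ :=
  x.coprod (c • LinearMap.id)

/-- The `G₂`-component of the product of two elements of degree one of the trimming complex, each
recorded by its image in `M = F₁` and its component in `G₁`. -/
def summandProduct : M × G₁ →ₗ[R] M × G₁ →ₗ[R] G₂ :=
  β.compl₁₂ (LinearMap.fst R M G₁) (LinearMap.fst R M G₁) -
    γ.compl₁₂ (LinearMap.snd R M G₁) (x ∘ₗ LinearMap.fst R M G₁) -
    γ.compl₁₂ (generatorLift x c) (LinearMap.snd R M G₁)

theorem generatorLift_apply (z : M × G₁) : generatorLift x c z = x z.1 + c • z.2 := rfl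

theorem summandProduct_apply (z w : M × G₁) : summandProduct β γ x c z w =
    β z.1 w.1 - γ z.2 (x w.1) - γ (generatorLift x c z) w.2 := rfl

variable {β γ x c}

theorem map_generatorLift (hx : ∀ a, m₁ (x a) = c * π a - d₁ a) {z : M × G₁}
    (hz : π z.1 = -m₁ z.2) : m₁ (generatorLift x c z) = -d₁ z.1 := by
  rw [generatorLift_apply, map_add, map_smul, hx, hz, smul_eq_mul]
  ring

theorem generatorLift_mem_smul_top {J : Ideal R} (hc : c ∈ J) {z : M × G₁}
    (hz : z.1 ∈ J • (⊤ : Submodule R M)) :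
    generatorLift x c z ∈ J • (⊤ : Submodule R G₁) :=
  add_mem (map_mem_smul_top x hz) (Submodule.smul_mem_smul hc Submodule.mem_top)

theorem summandProduct_isAlt (hβ : β.IsAlt) (hγ : γ.IsAlt) : (summandProduct β γ x c).IsAlt := by
  intro z
  rw [summandProduct_apply, generatorLift_apply, hβ, map_add, map_smul, LinearMap.add_apply,
    LinearMap.smul_apply, hγ, ← hγ.neg z.2 (x z.1)]
  module

theorem map_summandProduct (hγ : IsDGProduct₁₁ m₁ m₂ γ) (hx : ∀ a, m₁ (x a) = c * π a - d₁ a)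
    (hβ : ∀ a b, m₂ (β a b) = κ a b - π a • x b + π b • x a) {z w : M × G₁}
    (hz : π z.1 = -m₁ z.2) (hw : π w.1 = -m₁ w.2) :
    m₂ (summandProduct β γ x c z w) = κ z.1 w.1 + d₁ z.1 • w.2 - d₁ w.1 • z.2 := by
  rw [summandProduct_apply, map_sub, map_sub, hβ, hγ.leibniz₁₁, hγ.leibniz₁₁,
    map_generatorLift hx hz, generatorLift_apply, hx, hz, hw]
  module

theorem summandProduct_zero_left_fst (z : M × G₁) (h : G₁) :
    summandProduct β γ x c z (0, h) = -γ (generatorLift x c z) h := by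
  simp [summandProduct_apply]

theorem summandProduct_smul_generator (hβ : β e = 0) (hx : x e = 0) (r s : R) (g h : G₁) :
    summandProduct β γ x c (r • e, g) (s • e, h) = -(c • γ g h) := by
  simp [summandProduct_apply, generatorLift_apply, hβ, hx]

theorem summandProduct_mem_smul_top {J : Ideal R} (hc : c ∈ J) {z w : M × G₁}
    (hz : z.1 ∈ J • (⊤ : Submodule R M)) (hw : w.1 ∈ J • (⊤ : Submodule R M)) :
    summandProduct β γ x c z w ∈ J • (⊤ : Submodule R G₂) :=
  sub_mem (sub_mem (map_mem_smul_top (β z.1) hw) (map_mem_smul_top (γ z.2 ∘ₗ x) hw))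
    (map_mem_smul_top (γ.flip w.2) (generatorLift_mem_smul_top hc hz))

end OneGenerator

section TrimmingComplex

variable {R ι F₁' F₂ F₃ : Type*} {G₁ G₂ G₃ : ι → Type*} [CommRing R]
variable [AddCommGroup F₁'] [Module R F₁'] [AddCommGroup F₂] [Module R F₂]
variable [AddCommGroup F₃] [Module R F₃]
variable [∀ i, AddCommGroup (G₁ i)] [∀ i, Module R (G₁ i)]
variable [∀ i, AddCommGroup (G₂ i)] [∀ i, Module R (G₂ i)]
variable [∀ i, AddCommGroup (G₃ i)] [∀ i, Module R (G₃ i)]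
variable (d₁ : F₁' × (ι → R) →ₗ[R] R) (d₂ : F₂ →ₗ[R] F₁' × (ι → R)) (d₃ : F₃ →ₗ[R] F₂)
variable (m₁ : ∀ i, G₁ i →ₗ[R] R) (m₂ : ∀ i, G₂ i →ₗ[R] G₁ i) (m₃ : ∀ i, G₃ i →ₗ[R] G₂ i)
variable (q₁ : ∀ i, F₂ →ₗ[R] G₁ i) (q₂ : ∀ i, F₃ →ₗ[R] G₂ i)

/-- The degree-one part of the comparison map from the trimming complex to `F`; in degrees two and
three the comparison map is the projection onto `F₂` and `F₃`. -/
def trimComparison : F₁' × (∀ i, G₁ i) →ₗ[R] F₁' × (ι → R) :=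
  LinearMap.id.prodMap (LinearMap.piMap fun i => -m₁ i)

/-- The differential of the trimming complex in degree two, as a linear map. -/
def trimD₂ : F₂ × (∀ i, G₂ i) →ₗ[R] F₁' × (∀ i, G₁ i) :=
  (LinearMap.fst R F₁' (ι → R) ∘ₗ d₂ ∘ₗ LinearMap.fst R F₂ _).prod <| LinearMap.pi fun i =>
    -(q₁ i ∘ₗ LinearMap.fst R F₂ _) + m₂ i ∘ₗ LinearMap.proj i ∘ₗ LinearMap.snd R F₂ _

/-- The differential of the trimming complex in degree three, as a linear map. -/
def trimD₃ : F₃ × (∀ i, G₃ i) →ₗ[R] F₂ × (∀ i, G₂ i) :=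
  (d₃ ∘ₗ LinearMap.fst R F₃ _).prod <| LinearMap.pi fun i =>
    q₂ i ∘ₗ LinearMap.fst R F₃ _ + m₃ i ∘ₗ LinearMap.proj i ∘ₗ LinearMap.snd R F₃ _

/-- An element of degree one of the trimming complex as seen from the `k`-th trimmed generator: its
image in `F₁` together with its component in `G₁ k`. -/
def trimCoords (k : ι) : F₁' × (∀ i, G₁ i) →ₗ[R] (F₁' × (ι → R)) × G₁ k :=
  (trimComparison m₁).prod (LinearMap.proj k ∘ₗ LinearMap.snd R F₁' _)

variable {d₁ d₂ d₃ m₁ m₂ m₃ q₁ q₂}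

theorem trimComparison_apply (z : F₁' × ∀ i, G₁ i) :
    trimComparison m₁ z = (z.1, fun i => -m₁ i (z.2 i)) := rfl

theorem trimD₂_apply (w : F₂ × ∀ i, G₂ i) :
    trimD₂ d₂ m₂ q₁ w = ((d₂ w.1).1, fun i => -q₁ i w.1 + m₂ i (w.2 i)) := rfl

theorem trimD₃_apply (u : F₃ × ∀ i, G₃ i) :
    trimD₃ d₃ m₃ q₂ u = (d₃ u.1, fun i => q₂ i u.1 + m₃ i (u.2 i)) := rfl

theorem trimCoords_apply (k : ι) (z : F₁' × ∀ i, G₁ i) :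
    trimCoords m₁ k z = (trimComparison m₁ z, z.2 k) := rfl

theorem trimComparison_inl (f : F₁') : trimComparison m₁ (f, 0) = (f, 0) := by
  simp [trimComparison_apply, Pi.zero_def]

theorem trimComparison_single [DecidableEq ι] (i : ι) (g : G₁ i) :
    trimComparison m₁ (0, Pi.single i g) = -m₁ i g • ((0 : F₁'), (Pi.single i 1 : ι → R)) := by
  refine Prod.ext (by simp [trimComparison_apply]) (funext fun j => ?_)
  rcases eq_or_ne j i with rfl | hj
  · simp [trimComparison_apply]
  · simp [trimComparison_apply, hj]

theorem trimComparison_inr_mem_smul_top [Finite ι] {J : Ideal R} (hJ : ∀ i g, m₁ i g ∈ J)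
    (g : ∀ i, G₁ i) :
    trimComparison m₁ (0, g) ∈ J • (⊤ : Submodule R (F₁' × (ι → R))) :=
  prodMk_mem_smul_top (zero_mem _) fun i => by
    simpa using neg_mem (hJ i (g i))

theorem trimComparison_trimD₂ (hq₁ : ∀ i v, m₁ i (q₁ i v) = (d₂ v).2 i)
    (hm : ∀ i c, m₁ i (m₂ i c) = 0) (w : F₂ × ∀ i, G₂ i) :
    trimComparison m₁ (trimD₂ d₂ m₂ q₁ w) = d₂ w.1 := by
  refine Prod.ext rfl (funext fun i => ?_)
  simp [trimComparison_apply, trimD₂_apply, hq₁, hm]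

theorem trimD₃_injective (hd₃ : Function.Injective d₃) (hm₃ : ∀ i, Function.Injective (m₃ i)) :
    Function.Injective (trimD₃ d₃ m₃ q₂) := by
  rw [injective_iff_map_eq_zero]
  rintro ⟨u, v⟩ h
  obtain ⟨hu, hv⟩ := Prod.ext_iff.mp h
  obtain rfl : u = 0 := hd₃ (hu.trans (map_zero d₃).symm)
  refine Prod.ext rfl (funext fun i => hm₃ i ?_)
  simpa [trimD₃_apply] using congrFun hv i

theorem exact_trimD₃_trimD₂ (hq₁ : ∀ i v, m₁ i (q₁ i v) = (d₂ v).2 i)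
    (hq₂ : ∀ i u, m₂ i (q₂ i u) = q₁ i (d₃ u)) (hd₂₃ : Function.Exact d₃ d₂)
    (hm₁₂ : ∀ i c, m₁ i (m₂ i c) = 0) (hm₂₃ : ∀ i, Function.Exact (m₃ i) (m₂ i)) :
    Function.Exact (trimD₃ d₃ m₃ q₂) (trimD₂ d₂ m₂ q₁) := by
  intro w
  constructor
  · intro hw
    obtain ⟨u, hu⟩ := (hd₂₃ w.1).mp (by rw [← trimComparison_trimD₂ hq₁ hm₁₂ w, hw, map_zero])
    have hcycle (i : ι) : m₂ i (w.2 i - q₂ i u) = 0 := by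
      rw [map_sub, hq₂, hu, sub_eq_neg_add]
      exact congrFun (congrArg Prod.snd hw) i
    choose v hv using fun i => (hm₂₃ i _).mp (hcycle i)
    exact ⟨(u, v), Prod.ext hu (funext fun i => by simp [trimD₃_apply, hv])⟩
  · rintro ⟨u, rfl⟩
    refine Prod.ext ?_ (funext fun i => ?_)
    · simp [trimD₃_apply, trimD₂_apply, hd₂₃.apply_apply_eq_zero]
    · simp [trimD₃_apply, trimD₂_apply, hq₂, (hm₂₃ i).apply_apply_eq_zero]

variable [DecidableEq ι] {μ₁₁ : F₁' × (ι → R) →ₗ[R] F₁' × (ι → R) →ₗ[R] F₂}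
variable {γ₁₁ : ∀ k, G₁ k →ₗ[R] G₁ k →ₗ[R] G₂ k} {γ₁₂ : ∀ k, G₁ k →ₗ[R] G₂ k →ₗ[R] G₃ k}
variable {β : ∀ k, F₁' × (ι → R) →ₗ[R] F₁' × (ι → R) →ₗ[R] G₂ k}

variable (q₁ μ₁₁) in
/-- Multiplication by the `k`-th trimmed generator of `F₁`, followed by the comparison map `q₁ k` to
the resolution `G k`. -/
def generatorMul (k : ι) : F₁' × (ι → R) →ₗ[R] G₁ k :=
  q₁ k ∘ₗ μ₁₁ (0, Pi.single k 1)

theorem map_generatorMul (hF : IsDGProduct₁₁ d₁ d₂ μ₁₁)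
    (hq₁ : ∀ i v, m₁ i (q₁ i v) = (d₂ v).2 i) (k : ι) (a : F₁' × (ι → R)) :
    m₁ k (generatorMul q₁ μ₁₁ k a) = d₁ (0, Pi.single k 1) * a.2 k - d₁ a := by
  simp [generatorMul, hq₁, hF.leibniz₁₁]

theorem generatorMul_single (hμ₁₁ : μ₁₁.IsAlt) (k : ι) :
    generatorMul q₁ μ₁₁ k (0, Pi.single k 1) = 0 := by
  rw [generatorMul, LinearMap.comp_apply, hμ₁₁, map_zero]

theorem exists_isAlt_trimCorrection [Finite ι] [Module.Projective R F₁']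
    (hF : IsDGProduct₁₁ d₁ d₂ μ₁₁) (hq₁ : ∀ i v, m₁ i (q₁ i v) = (d₂ v).2 i)
    (hm : ∀ i, Function.Exact (m₂ i) (m₁ i)) :
    ∃ β : ∀ k, F₁' × (ι → R) →ₗ[R] F₁' × (ι → R) →ₗ[R] G₂ k,
      (∀ k, (β k).IsAlt) ∧ (∀ k, β k (0, Pi.single k 1) = 0) ∧
      ∀ k a b, m₂ k (β k a b) =
        q₁ k (μ₁₁ a b) - a.2 k • generatorMul q₁ μ₁₁ k b + b.2 k • generatorMul q₁ μ₁₁ k a := by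
  choose β hβ hβe hmβ using fun k => exists_isAlt_correction (d₁ := d₁) (e := (0, Pi.single k 1))
    (π := LinearMap.proj k ∘ₗ LinearMap.snd R F₁' (ι → R)) (κ := μ₁₁.compr₂ (q₁ k))
    (by simp) (fun a => by simp [hF.isAlt.self_eq_zero])
    (fun a b => by simp [hq₁, hF.leibniz₁₁]) (hm k)
  exact ⟨β, hβ, hβe, hmβ⟩

variable (d₁ m₁ q₁ μ₁₁ γ₁₁ β) in
/-- The product of two elements of degree one of the trimming complex. Its `F₂`-component is the
product of their images in `F₁`, and its `G₂ k`-component is that of `summandProduct`, in which the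
form `β k` is chosen so as to make the Leibniz rule hold. -/
def trimProduct₁₁ : F₁' × (∀ i, G₁ i) →ₗ[R] F₁' × (∀ i, G₁ i) →ₗ[R] F₂ × (∀ i, G₂ i) :=
  LinearMap.mk₂ R (fun z z' => (μ₁₁ (trimComparison m₁ z) (trimComparison m₁ z'),
      fun k => summandProduct (β k) (γ₁₁ k) (generatorMul q₁ μ₁₁ k) (d₁ (0, Pi.single k 1))
        (trimCoords m₁ k z) (trimCoords m₁ k z')))
    (fun _ _ _ => by ext <;> simp) (fun _ _ _ => by ext <;> simp)
    (fun _ _ _ => by ext <;> simp) (fun _ _ _ => by ext <;> simp)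

theorem trimProduct₁₁_apply (z z' : F₁' × ∀ i, G₁ i) :
    trimProduct₁₁ d₁ m₁ q₁ μ₁₁ γ₁₁ β z z' = (μ₁₁ (trimComparison m₁ z) (trimComparison m₁ z'),
      fun k => summandProduct (β k) (γ₁₁ k) (generatorMul q₁ μ₁₁ k) (d₁ (0, Pi.single k 1))
        (trimCoords m₁ k z) (trimCoords m₁ k z')) := rfl

theorem map_snd_trimProduct₁₁ (hF : IsDGProduct₁₁ d₁ d₂ μ₁₁)
    (hG : ∀ k, IsDGProduct₁₁ (m₁ k) (m₂ k) (γ₁₁ k)) (hq₁ : ∀ i v, m₁ i (q₁ i v) = (d₂ v).2 i)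
    (hmβ : ∀ k a b, m₂ k (β k a b) =
      q₁ k (μ₁₁ a b) - a.2 k • generatorMul q₁ μ₁₁ k b + b.2 k • generatorMul q₁ μ₁₁ k a)
    (z z' : F₁' × ∀ i, G₁ i) (k : ι) :
    m₂ k ((trimProduct₁₁ d₁ m₁ q₁ μ₁₁ γ₁₁ β z z').2 k) =
      q₁ k (μ₁₁ (trimComparison m₁ z) (trimComparison m₁ z')) +
        d₁ (trimComparison m₁ z) • z'.2 k - d₁ (trimComparison m₁ z') • z.2 k :=
  map_summandProduct (κ := μ₁₁.compr₂ (q₁ k)) (z := trimCoords m₁ k z) (w := trimCoords m₁ k z')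
    (π := LinearMap.proj k ∘ₗ LinearMap.snd R F₁' (ι → R)) (hG k) (map_generatorMul hF hq₁ k)
    (hmβ k) rfl rfl

theorem isDGProduct₁₁_trimProduct₁₁ (hF : IsDGProduct₁₁ d₁ d₂ μ₁₁)
    (hG : ∀ k, IsDGProduct₁₁ (m₁ k) (m₂ k) (γ₁₁ k)) (hq₁ : ∀ i v, m₁ i (q₁ i v) = (d₂ v).2 i)
    (hβ : ∀ k, (β k).IsAlt) (hmβ : ∀ k a b, m₂ k (β k a b) =
      q₁ k (μ₁₁ a b) - a.2 k • generatorMul q₁ μ₁₁ k b + b.2 k • generatorMul q₁ μ₁₁ k a) :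
    IsDGProduct₁₁ (d₁ ∘ₗ trimComparison m₁) (trimD₂ d₂ m₂ q₁)
      (trimProduct₁₁ d₁ m₁ q₁ μ₁₁ γ₁₁ β) where
  leibniz₁₁ z z' := by
    refine Prod.ext ?_ (funext fun k => ?_)
    · rw [trimD₂_apply, trimProduct₁₁_apply, hF.leibniz₁₁]
      rfl
    · simp only [trimD₂_apply, map_snd_trimProduct₁₁ hF hG hq₁ hmβ]
      rw [trimProduct₁₁_apply, add_sub_assoc, neg_add_cancel_left]
      rfl
  isAlt z := Prod.ext (hF.isAlt _) (funext fun k => summandProduct_isAlt (hβ k) (hG k).isAlt _)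

theorem trimProduct₁₁_single_single (hμ₁₁ : μ₁₁.IsAlt) (hβ : ∀ k, (β k).IsAlt)
    (hβe : ∀ k, β k (0, Pi.single k 1) = 0) (i : ι) (g g' : G₁ i) :
    trimProduct₁₁ d₁ m₁ q₁ μ₁₁ γ₁₁ β (0, Pi.single i g) (0, Pi.single i g') =
      (0, Pi.single i (-(d₁ (0, Pi.single i 1) • γ₁₁ i g g'))) := by
  rw [trimProduct₁₁_apply, trimComparison_single, trimComparison_single]
  simp only [map_smul, LinearMap.smul_apply, hμ₁₁.self_eq_zero, smul_zero, trimCoords_apply,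
    trimComparison_single]
  refine congrArg (Prod.mk 0) (funext fun k => ?_)
  rcases eq_or_ne k i with rfl | hk
  · rw [Pi.single_eq_same, Pi.single_eq_same, Pi.single_eq_same,
      summandProduct_smul_generator (hβe k) (generatorMul_single hμ₁₁ k)]
  · simp only [summandProduct_apply, Pi.single_eq_of_ne hk, map_smul, LinearMap.smul_apply,
      (hβ k).self_eq_zero, map_zero, LinearMap.zero_apply, smul_zero, sub_zero]

theorem trimProduct₁₁_inr_inr_mem_smul_top [Finite ι] {J : Ideal R}
    (hJd : ∀ i, d₁ (0, Pi.single i 1) ∈ J) (hJm : ∀ i g, m₁ i g ∈ J) (g g' : ∀ i, G₁ i) :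
    trimProduct₁₁ d₁ m₁ q₁ μ₁₁ γ₁₁ β (0, g) (0, g') ∈
      J • (⊤ : Submodule R (F₂ × (∀ i, G₂ i))) :=
  prodMk_mem_smul_top
    (map_mem_smul_top (μ₁₁ _) (trimComparison_inr_mem_smul_top hJm g'))
    fun k => summandProduct_mem_smul_top (hJd k) (trimComparison_inr_mem_smul_top hJm g)
      (trimComparison_inr_mem_smul_top hJm g')

theorem trimProduct₁₂_inr
    {t₁₂ : F₁' × (∀ i, G₁ i) →ₗ[R] F₂ × (∀ i, G₂ i) →ₗ[R] F₃ × (∀ i, G₃ i)}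
    (hT : IsDGProduct (d₁ ∘ₗ trimComparison m₁) (trimD₂ d₂ m₂ q₁) (trimD₃ d₃ m₃ q₂)
      (trimProduct₁₁ d₁ m₁ q₁ μ₁₁ γ₁₁ β) t₁₂)
    (hF : IsDGProduct₁₁ d₁ d₂ μ₁₁)
    (hG : ∀ k, IsDGProduct (m₁ k) (m₂ k) (m₃ k) (γ₁₁ k) (γ₁₂ k))
    (hq₁ : ∀ i v, m₁ i (q₁ i v) = (d₂ v).2 i) (hm₁₂ : ∀ i v, m₁ i (m₂ i v) = 0)
    (hinj : Function.Injective (trimD₃ d₃ m₃ q₂))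
    (z : F₁' × ∀ i, G₁ i) (v : ∀ i, G₂ i) :
    t₁₂ z (0, v) = (0, fun k => -γ₁₂ k (generatorLift (generatorMul q₁ μ₁₁ k)
      (d₁ (0, Pi.single k 1)) (trimCoords m₁ k z)) (v k)) := by
  have hφ : trimComparison m₁ (trimD₂ d₂ m₂ q₁ (0, v)) = 0 :=
    (trimComparison_trimD₂ hq₁ hm₁₂ (0, v)).trans (map_zero d₂)
  have hlift (k : ι) : m₁ k (generatorLift (generatorMul q₁ μ₁₁ k) (d₁ (0, Pi.single k 1))
      (trimCoords m₁ k z)) = -d₁ (trimComparison m₁ z) :=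
    map_generatorLift (π := LinearMap.proj k ∘ₗ LinearMap.snd R F₁' (ι → R))
      (map_generatorMul hF hq₁ k) rfl
  apply hinj
  rw [hT.leibniz₁₂, trimProduct₁₁_apply, hφ]
  refine Prod.ext (by simp [trimD₃_apply]) (funext fun k => ?_)
  have hcoords : trimCoords m₁ k (trimD₂ d₂ m₂ q₁ (0, v)) = (0, m₂ k (v k)) :=
    Prod.ext hφ (by simp [trimCoords_apply, trimD₂_apply])
  simp only [hcoords, summandProduct_zero_left_fst, trimD₃_apply, map_neg, (hG k).leibniz₁₂, hlift,
    map_zero, zero_add, LinearMap.comp_apply, Prod.smul_mk, Prod.mk_sub_mk, Pi.sub_apply,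
    Pi.smul_apply]
  module

theorem trimProduct₁₂_single_single
    {t₁₂ : F₁' × (∀ i, G₁ i) →ₗ[R] F₂ × (∀ i, G₂ i) →ₗ[R] F₃ × (∀ i, G₃ i)}
    (hT : IsDGProduct (d₁ ∘ₗ trimComparison m₁) (trimD₂ d₂ m₂ q₁) (trimD₃ d₃ m₃ q₂)
      (trimProduct₁₁ d₁ m₁ q₁ μ₁₁ γ₁₁ β) t₁₂)
    (hF : IsDGProduct₁₁ d₁ d₂ μ₁₁)
    (hG : ∀ k, IsDGProduct (m₁ k) (m₂ k) (m₃ k) (γ₁₁ k) (γ₁₂ k))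
    (hq₁ : ∀ i v, m₁ i (q₁ i v) = (d₂ v).2 i) (hm₁₂ : ∀ i v, m₁ i (m₂ i v) = 0)
    (hinj : Function.Injective (trimD₃ d₃ m₃ q₂))
    (i : ι) (g : G₁ i) (c : G₂ i) :
    t₁₂ (0, Pi.single i g) (0, Pi.single i c) =
      (0, Pi.single i (-(d₁ (0, Pi.single i 1) • γ₁₂ i g c))) := by
  rw [trimProduct₁₂_inr hT hF hG hq₁ hm₁₂ hinj]
  refine congrArg (Prod.mk 0) (funext fun k => ?_)
  rcases eq_or_ne k i with rfl | hk
  · simp only [generatorLift_apply, trimCoords_apply, trimComparison_single, map_smul,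
      generatorMul_single hF.isAlt, smul_zero, zero_add, Pi.single_eq_same, LinearMap.smul_apply]
  · simp only [Pi.single_eq_of_ne hk, map_zero, neg_zero]

theorem trimProduct₁₂_inr_inr_mem_smul_top [Finite ι] {J : Ideal R}
    {t₁₂ : F₁' × (∀ i, G₁ i) →ₗ[R] F₂ × (∀ i, G₂ i) →ₗ[R] F₃ × (∀ i, G₃ i)}
    (hT : IsDGProduct (d₁ ∘ₗ trimComparison m₁) (trimD₂ d₂ m₂ q₁) (trimD₃ d₃ m₃ q₂)
      (trimProduct₁₁ d₁ m₁ q₁ μ₁₁ γ₁₁ β) t₁₂)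
    (hF : IsDGProduct₁₁ d₁ d₂ μ₁₁)
    (hG : ∀ k, IsDGProduct (m₁ k) (m₂ k) (m₃ k) (γ₁₁ k) (γ₁₂ k))
    (hq₁ : ∀ i v, m₁ i (q₁ i v) = (d₂ v).2 i) (hm₁₂ : ∀ i v, m₁ i (m₂ i v) = 0)
    (hinj : Function.Injective (trimD₃ d₃ m₃ q₂))
    (hJd : ∀ i, d₁ (0, Pi.single i 1) ∈ J) (hJm : ∀ i g, m₁ i g ∈ J)
    (g : ∀ i, G₁ i) (c : ∀ i, G₂ i) :
    t₁₂ (0, g) (0, c) ∈ J • (⊤ : Submodule R (F₃ × (∀ i, G₃ i))) := by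
  rw [trimProduct₁₂_inr hT hF hG hq₁ hm₁₂ hinj]
  exact prodMk_mem_smul_top (zero_mem _) fun k => neg_mem <|
    map_mem_smul_top ((γ₁₂ k).flip (c k)) <|
      generatorLift_mem_smul_top (hJd k) (trimComparison_inr_mem_smul_top hJm g)

end TrimmingComplex

section TrimDG

variable {R : Type u} [CommRing R] {t : ℕ} {F1' F2 F3 : Type u} {G1 G2 G3 : Fin t → Type u}
variable [AddCommGroup F1'] [Module R F1'] [AddCommGroup F2] [Module R F2]
variable [AddCommGroup F3] [Module R F3]
variable [∀ i, AddCommGroup (G1 i)] [∀ i, Module R (G1 i)]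
variable [∀ i, AddCommGroup (G2 i)] [∀ i, Module R (G2 i)]
variable [∀ i, AddCommGroup (G3 i)] [∀ i, Module R (G3 i)]
variable {d1 : F1' × (Fin t → R) →ₗ[R] R} {d2 : F2 →ₗ[R] F1' × (Fin t → R)} {d3 : F3 →ₗ[R] F2}
variable {m1 : ∀ i, G1 i →ₗ[R] R} {m2 : ∀ i, G2 i →ₗ[R] G1 i} {m3 : ∀ i, G3 i →ₗ[R] G2 i}
variable {q1 : ∀ i, F2 →ₗ[R] G1 i} {q2 : ∀ i, F3 →ₗ[R] G2 i}
variable {μ11 : F1' × (Fin t → R) →ₗ[R] F1' × (Fin t → R) →ₗ[R] F2}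
variable {μ12 : F1' × (Fin t → R) →ₗ[R] F2 →ₗ[R] F3}
variable {γ11 : ∀ i, G1 i →ₗ[R] G1 i →ₗ[R] G2 i} {γ12 : ∀ i, G1 i →ₗ[R] G2 i →ₗ[R] G3 i}
variable {t11 : F1' × (∀ i, G1 i) →ₗ[R] F1' × (∀ i, G1 i) →ₗ[R] F2 × (∀ i, G2 i)}
variable {t12 : F1' × (∀ i, G1 i) →ₗ[R] F2 × (∀ i, G2 i) →ₗ[R] F3 × (∀ i, G3 i)}

theorem Tl1_eq (z : F1' × ∀ i, G1 i) : Tl1 d1 m1 z = d1 (trimComparison m1 z) := by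
  have hdecomp : trimComparison m1 z =
      (z.1, 0) - ∑ i, m1 i (z.2 i) • ((0 : F1'), (Pi.single i 1 : Fin t → R)) := by
    ext j <;> simp [trimComparison_apply, Prod.fst_sum, Prod.snd_sum, Pi.single_apply]
  rw [hdecomp, map_sub, map_sum]
  simp only [map_smul, smul_eq_mul, Tl1]

theorem trimDGAxioms_of_isDGProduct
    (hT : IsDGProduct (d1 ∘ₗ trimComparison m1) (trimD₂ d2 m2 q1) (trimD₃ d3 m3 q2) t11 t12)
    (hinj : Function.Injective (trimD₃ d3 m3 q2)) :
    TrimDGAxioms d1 d2 d3 m1 m2 m3 q1 q2 t11 t12 := by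
  refine ⟨fun z z' => ?_, hT.isAlt, fun z z' => (hT.isAlt.neg z' z).symm, fun z w => ?_,
    hT.assoc hinj⟩
  · rw [Tl1_eq, Tl1_eq]
    exact hT.leibniz₁₁ z z'
  · rw [Tl1_eq]
    exact hT.leibniz₁₂ z w

theorem trimDGFormulas_of_components (hμ11 : μ11.IsAlt)
    (hfst₁₁ : ∀ z z', (t11 z z').1 = μ11 (trimComparison m1 z) (trimComparison m1 z'))
    (hsnd₁₁ : ∀ z z' k, m2 k ((t11 z z').2 k) =
      q1 k (μ11 (trimComparison m1 z) (trimComparison m1 z')) +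
        d1 (trimComparison m1 z) • z'.2 k - d1 (trimComparison m1 z') • z.2 k)
    (hfst₁₂ : ∀ z w, (t12 z w).1 = μ12 (trimComparison m1 z) w.1)
    (hG₁₁ : ∀ i g g', t11 (0, Pi.single i g) (0, Pi.single i g') =
      (0, Pi.single i (-(d1 (0, Pi.single i 1) • γ11 i g g'))))
    (hG₁₂ : ∀ i g c, t12 (0, Pi.single i g) (0, Pi.single i c) =
      (0, Pi.single i (-(d1 (0, Pi.single i 1) • γ12 i g c)))) :
    TrimDGFormulas d1 d3 m1 m2 m3 q1 q2 μ11 μ12 γ11 γ12 t11 t12 := by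
  have hμF (f : F1') (i : Fin t) (g : G1 i) :
      μ11 (f, 0) (trimComparison m1 (0, Pi.single i g)) =
        m1 i g • μ11 (0, Pi.single i 1) (f, 0) := by
    rw [trimComparison_single, map_smul, neg_smul, ← smul_neg, hμ11.neg]
  have hμG (i j : Fin t) (g : G1 i) (g' : G1 j) :
      μ11 (trimComparison m1 (0, Pi.single i g)) (trimComparison m1 (0, Pi.single j g')) =
        (m1 i g * m1 j g') • μ11 (0, Pi.single i 1) (0, Pi.single j 1) := by
    rw [trimComparison_single, trimComparison_single, map_smul, map_smul, LinearMap.smul_apply,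
      smul_smul]
    congr 1
    ring
  have hd1 (i : Fin t) (g : G1 i) : d1 (trimComparison m1 (0, Pi.single i g)) =
      -(m1 i g * d1 (0, Pi.single i 1)) := by
    rw [trimComparison_single, map_smul, smul_eq_mul, neg_mul]
  refine ⟨fun f f' => ⟨_, fun k => ?_, Prod.ext ?_ rfl⟩,
    fun f i g => ⟨_, fun k => ?_, Prod.ext ?_ rfl⟩, hG₁₁,
    fun i j _ g g' => ⟨_, fun k => ?_, Prod.ext ?_ rfl⟩,
    fun f w => ⟨_, Prod.ext ?_ rfl⟩, fun f i c => ⟨_, Prod.ext ?_ rfl⟩, hG₁₂,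
    fun i j _ g c => ⟨_, Prod.ext ?_ rfl⟩, fun i g w => ⟨_, Prod.ext ?_ rfl⟩⟩
  · simp only [hsnd₁₁, trimComparison_inl, Pi.zero_apply, smul_zero, sub_zero, add_zero]
  · rw [hfst₁₁, trimComparison_inl, trimComparison_inl]
  · simp only [hsnd₁₁, trimComparison_inl, hμF, map_smul, Pi.zero_apply, smul_zero, sub_zero,
      Pi.single_smul, Pi.smul_apply]
  · rw [hfst₁₁, trimComparison_inl, hμF]
  · simp only [hsnd₁₁, hμG, hd1, map_smul, Pi.single_smul, Pi.smul_apply]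
    module
  · rw [hfst₁₁, hμG]
  · rw [hfst₁₂, trimComparison_inl]
  · rw [hfst₁₂, map_zero]
  · rw [hfst₁₂, map_zero]
  · rw [hfst₁₂, trimComparison_single, map_smul, LinearMap.smul_apply]

theorem trimming_complex_nontrivial_products_general [Module.Projective R F1'] (J : Ideal R)
    (hF : IsDGProduct d1 d2 d3 μ11 μ12) (hd12 : ∀ v, d1 (d2 v) = 0)
    (hd23 : Function.Exact d3 d2) (hd3 : Function.Injective d3)
    (hG : ∀ i, IsDGProduct (m1 i) (m2 i) (m3 i) (γ11 i) (γ12 i))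
    (hm12 : ∀ i, Function.Exact (m2 i) (m1 i)) (hm23 : ∀ i, Function.Exact (m3 i) (m2 i))
    (hm3 : ∀ i, Function.Injective (m3 i)) (hq1 : ∀ i v, m1 i (q1 i v) = (d2 v).2 i)
    (hq2 : ∀ i w, m2 i (q2 i w) = q1 i (d3 w))
    (hJd : ∀ i, d1 (0, Pi.single i 1) ∈ J) (hJm : ∀ i g, m1 i g ∈ J) :
    ∃ (t11 : F1' × (∀ i, G1 i) →ₗ[R] F1' × (∀ i, G1 i) →ₗ[R] F2 × (∀ i, G2 i))
      (t12 : F1' × (∀ i, G1 i) →ₗ[R] F2 × (∀ i, G2 i) →ₗ[R] F3 × (∀ i, G3 i)),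
      TrimDGAxioms d1 d2 d3 m1 m2 m3 q1 q2 t11 t12 ∧
      TrimDGFormulas d1 d3 m1 m2 m3 q1 q2 μ11 μ12 γ11 γ12 t11 t12 ∧
      (∀ g g' : ∀ i, G1 i, t11 (0, g) (0, g') ∈ J • (⊤ : Submodule R (F2 × (∀ i, G2 i)))) ∧
      ∀ (g : ∀ i, G1 i) (c : ∀ i, G2 i),
        t12 (0, g) (0, c) ∈ J • (⊤ : Submodule R (F3 × (∀ i, G3 i))) := by
  have hmm (i : Fin t) (c : G2 i) : m1 i (m2 i c) = 0 := (hm12 i).apply_apply_eq_zero c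
  have hinj : Function.Injective (trimD₃ d3 m3 q2) := trimD₃_injective hd3 hm3
  obtain ⟨β, hβ, hβe, hmβ⟩ := exists_isAlt_trimCorrection hF.toIsDGProduct₁₁ hq1 hm12
  have hT₁₁ := isDGProduct₁₁_trimProduct₁₁ hF.toIsDGProduct₁₁
    (fun k => (hG k).toIsDGProduct₁₁) hq1 hβ hmβ
  have hφ := trimComparison_trimD₂ hq1 hmm
  obtain ⟨t12, hT⟩ := hT₁₁.exists_isDGProduct (fun w => (congrArg d1 (hφ w)).trans (hd12 w.1))
    (exact_trimD₃_trimD₂ hq1 hq2 hd23 hmm hm23) hinj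
  refine ⟨trimProduct₁₁ d1 m1 q1 μ11 γ11 β, t12, trimDGAxioms_of_isDGProduct hT hinj,
    trimDGFormulas_of_components hF.isAlt (fun _ _ => rfl)
      (map_snd_trimProduct₁₁ hF.toIsDGProduct₁₁ (fun k => (hG k).toIsDGProduct₁₁) hq1 hmβ)
      (hT.map_mul₁₂ (φ₂ := LinearMap.fst R F2 _) (φ₃ := LinearMap.fst R F3 _) hF hd3
        (fun _ => rfl) (fun w => (hφ w).symm) (fun _ => rfl) fun _ _ => rfl)
      (trimProduct₁₁_single_single hF.isAlt hβ hβe)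
      (trimProduct₁₂_single_single hT hF.toIsDGProduct₁₁ hG hq1 hmm hinj),
    trimProduct₁₁_inr_inr_mem_smul_top hJd hJm,
    trimProduct₁₂_inr_inr_mem_smul_top hT hF.toIsDGProduct₁₁ hG hq1 hmm hinj hJd hJm⟩

end TrimDG

theorem trimming_complex_nontrivial_products
    {R : Type u} [CommRing R] [IsNoetherianRing R] [IsLocalRing R]
    -- regular local ring: the maximal ideal is generated by a regular sequence
    (hreg : ∃ xs : List R, RingTheory.Sequence.IsRegular R xs ∧
      Ideal.span {a | a ∈ xs} = maximalIdeal R)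
    (t : ℕ)
    (F1' F2 F3 : Type u)
    [AddCommGroup F1'] [Module R F1'] [Module.Free R F1'] [Module.Finite R F1']
    [AddCommGroup F2] [Module R F2] [Module.Free R F2] [Module.Finite R F2]
    [AddCommGroup F3] [Module R F3] [Module.Free R F3] [Module.Finite R F3]
    (G1 G2 G3 : Fin t → Type u)
    [∀ i, AddCommGroup (G1 i)] [∀ i, Module R (G1 i)]
    [∀ i, Module.Free R (G1 i)] [∀ i, Module.Finite R (G1 i)]
    [∀ i, AddCommGroup (G2 i)] [∀ i, Module R (G2 i)]
    [∀ i, Module.Free R (G2 i)] [∀ i, Module.Finite R (G2 i)]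
    [∀ i, AddCommGroup (G3 i)] [∀ i, Module R (G3 i)]
    [∀ i, Module.Free R (G3 i)] [∀ i, Module.Finite R (G3 i)]
    (I : Ideal R) (𝔞 : Fin t → Ideal R)
    (d1 : (F1' × (Fin t → R)) →ₗ[R] R)
    (d2 : F2 →ₗ[R] (F1' × (Fin t → R)))
    (d3 : F3 →ₗ[R] F2)
    -- `F` is a free resolution of `R/I`
    (hFres0 : LinearMap.range d1 = I)
    (hFres1 : LinearMap.ker d1 = LinearMap.range d2)
    (hFres2 : LinearMap.ker d2 = LinearMap.range d3)
    (hFres3 : LinearMap.ker d3 = ⊥)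
    -- `d₀ⁱ(F₂) ⊆ 𝔞 i e₀ⁱ`
    (ha : ∀ (i : Fin t) (v : F2), (d2 v).2 i ∈ 𝔞 i)
    (m1 : ∀ i, G1 i →ₗ[R] R) (m2 : ∀ i, G2 i →ₗ[R] G1 i) (m3 : ∀ i, G3 i →ₗ[R] G2 i)
    -- `G^i` is a free resolution of `R/𝔞 i`
    (hGres0 : ∀ i, LinearMap.range (m1 i) = 𝔞 i)
    (hGres1 : ∀ i, LinearMap.ker (m1 i) = LinearMap.range (m2 i))
    (hGres2 : ∀ i, LinearMap.ker (m2 i) = LinearMap.range (m3 i))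
    (hGres3 : ∀ i, LinearMap.ker (m3 i) = ⊥)
    -- the comparison maps of the trimming complex
    (q1 : ∀ i, F2 →ₗ[R] G1 i) (q2 : ∀ i, F3 →ₗ[R] G2 i)
    (hq1 : ∀ i v, m1 i (q1 i v) = (d2 v).2 i)
    (hq2 : ∀ i w, m2 i (q2 i w) = q1 i (d3 w))
    -- DG-algebra structure on `F`
    (μ11 : (F1' × (Fin t → R)) →ₗ[R] (F1' × (Fin t → R)) →ₗ[R] F2)
    (μ12 : (F1' × (Fin t → R)) →ₗ[R] F2 →ₗ[R] F3)
    (hFleib1 : ∀ a b, d2 (μ11 a b) = d1 a • b - d1 b • a)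
    (hFalt : ∀ a, μ11 a a = 0)
    (hFskew : ∀ a b, μ11 a b = - μ11 b a)
    (hFleib2 : ∀ a z, d3 (μ12 a z) = d1 a • z - μ11 a (d2 z))
    (hFassoc : ∀ a b c, μ12 c (μ11 a b) = μ12 a (μ11 b c))
    -- DG-algebra structures on the `G^i`
    (γ11 : ∀ i, G1 i →ₗ[R] G1 i →ₗ[R] G2 i)
    (γ12 : ∀ i, G1 i →ₗ[R] G2 i →ₗ[R] G3 i)
    (hGleib1 : ∀ i a b, m2 i (γ11 i a b) = m1 i a • b - m1 i b • a)
    (hGalt : ∀ i a, γ11 i a a = 0)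
    (hGskew : ∀ i a b, γ11 i a b = - γ11 i b a)
    (hGleib2 : ∀ i a c, m3 i (γ12 i a c) = m1 i a • c - γ11 i a (m2 i c))
    (hGassoc : ∀ i a b c, γ12 i c (γ11 i a b) = γ12 i a (γ11 i b c))
    -- minimality of `F` and the `G^i`
    (hminF1 : ∀ a, d1 a ∈ maximalIdeal R)
    (hminF2 : ∀ v, d2 v ∈ maximalIdeal R • (⊤ : Submodule R (F1' × (Fin t → R))))
    (hminF3 : ∀ w, d3 w ∈ maximalIdeal R • (⊤ : Submodule R F2))
    (hminG1 : ∀ i g, m1 i g ∈ maximalIdeal R)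
    (hminG2 : ∀ i c, m2 i c ∈ maximalIdeal R • (⊤ : Submodule R (G1 i)))
    (hminG3 : ∀ i u, m3 i u ∈ maximalIdeal R • (⊤ : Submodule R (G2 i))) :
    -- conclusion: for the DG-algebra structure of Theorem 3.2, all products in `T̄`
    -- having both factors in the `Ḡ`-summands vanish
    ∃ (t11 : (F1' × (∀ i, G1 i)) →ₗ[R] (F1' × (∀ i, G1 i)) →ₗ[R] (F2 × (∀ i, G2 i)))
      (t12 : (F1' × (∀ i, G1 i)) →ₗ[R] (F2 × (∀ i, G2 i)) →ₗ[R] (F3 × (∀ i, G3 i))),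
      TrimDGAxioms d1 d2 d3 m1 m2 m3 q1 q2 t11 t12 ∧
      TrimDGFormulas d1 d3 m1 m2 m3 q1 q2 μ11 μ12 γ11 γ12 t11 t12 ∧
      (∀ g g' : ∀ i, G1 i,
        t11 (0, g) (0, g') ∈ maximalIdeal R • (⊤ : Submodule R (F2 × (∀ i, G2 i)))) ∧
      (∀ (g : ∀ i, G1 i) (c : ∀ i, G2 i),
        t12 (0, g) (0, c) ∈ maximalIdeal R • (⊤ : Submodule R (F3 × (∀ i, G3 i)))) :=
  trimming_complex_nontrivial_products_general (maximalIdeal R) ⟨⟨hFleib1, hFalt⟩, hFleib2⟩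
    (LinearMap.exact_iff.mpr hFres1).apply_apply_eq_zero (LinearMap.exact_iff.mpr hFres2)
    (LinearMap.ker_eq_bot.mp hFres3) (fun i => ⟨⟨hGleib1 i, hGalt i⟩, hGleib2 i⟩)
    (fun i => LinearMap.exact_iff.mpr (hGres1 i)) (fun i => LinearMap.exact_iff.mpr (hGres2 i))
    (fun i => LinearMap.ker_eq_bot.mp (hGres3 i)) hq1 hq2 (fun _ => hminF1 _) hminG1
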